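/- arXiv:2502.06199 — 2 statements merged into one kernel-verified Lean document; each statement's English description precedes it below -/
import Mathlib

section
/- Let gamma > 1 and c_v > 0, and let rhobar_pm, qbar_pm, pbar_pm be positive reals with cbar_pm^2 = gamma pbar_pm / rhobar_pm, Mbar_pm = qbar_pm / cbar_pm, satisfying the background Rankine-Hugoniot relations rhobar_+ qbar_+ = rhobar_- qbar_-, pbar_+ + rhobar_+ qbar_+^2 = pbar_- + rhobar_- qbar_-^2, and qbar_+^2/2 + cbar_+^2/(gamma-1) = qbar_-^2/2 + cbar_-^2/(gamma-1). Define kappa, kappa1, kappa2 as in the context. Suppose real numbers dp, dq, ds, dp_-, dq_-, ds_-, g1, g2, g3 satisfy the three linearized Rankine-Hugoniot relations: (E1) (1/(rhobar_+^2 qbar_+ cbar_+^2)) dp + (1/(rhobar_+ qbar_+^2)) dq - (1/(gamma c_v rhobar_+ qbar_+)) ds - [ (1/(rhobar_-^2 qbar_- cbar_-^2)) dp_- + (1/(rhobar_- qbar_-^2)) dq_- - (1/(gamma c_v rhobar_- qbar_-)) ds_- ] = g1; (E2) (1/(rhobar_+ qbar_+)) dp + dq - pbar_+ ( (1/(rhobar_+^2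 qbar_+ cbar_+^2)) dp + (1/(rhobar_+ qbar_+^2)) dq - (1/(gamma c_v rhobar_+ qbar_+)) ds ) - [ (1/(rhobar_- qbar_-)) dp_- + dq_- - pbar_- ( (1/(rhobar_-^2 qbar_- cbar_-^2)) dp_- + (1/(rhobar_- qbar_-^2)) dq_- - (1/(gamma c_v rhobar_- qbar_-)) ds_- ) ] = g2; (E3) (1/rhobar_+) dp + qbar_+ dq + (pbar_+/((gamma-1) c_v rhobar_+)) ds - [ (1/rhobar_-) dp_- + qbar_- dq_- + (pbar_- /((gamma-1) c_v rhobar_-)) ds_- ] = g3. Then ((Mbar_+^2 - 1)/(rhobar_+ qbar_+^2)) dp = ((Mbar_-^2 - 1)/(rhobar_- qbar_-^2)) (1 - kappa) dp_- + kappa1 (dp_- + rhobar_- qbar_- dq_-) + kappa2 ds_- + e1 g1 + e2 g2 + e3 g3, for constants e1, e2, e3 depending only on gamma, c_v and the background states (pbar_pm, rhobar_pm, qbar_pm). -/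
noncomputable section

open Real

/-- the algebraic reduction (Lemma 3.2 / (3.58)) of the linearized
Rankine–Hugoniot relations: the downstream pressure perturbation is expressed through
the upstream perturbations via the constants `κ, κ₁, κ₂`, up to a fixed linear
combination of the quadratic remainders `g1, g2, g3`, whose coefficients `e1, e2, e3`
depend only on `γ`, `c_v` and the background states. -/
theorem linearized_RH_reduction
    (γ cv : ℝ) (hγ : 1 < γ) (hcv : 0 < cv)
    (ρm ρp qm qp pm pp : ℝ)
    (hρm : 0 < ρm) (hρp : 0 < ρp) (hqm : 0 < qm) (hqp : 0 < qp)
    (hpm : 0 < pm) (hpp : 0 < pp)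
    -- sonic speeds and Mach numbers of the background states
    (cm2 cp2 : ℝ) (hcm2 : cm2 = γ * pm / ρm) (hcp2 : cp2 = γ * pp / ρp)
    (M2m M2p : ℝ) (hM2m : M2m = qm ^ 2 / cm2) (hM2p : M2p = qp ^ 2 / cp2)
    -- background Rankine–Hugoniot conditions, transonic background shock
    (hmass : ρp * qp = ρm * qm)
    (hmom : pp + ρp * qp ^ 2 = pm + ρm * qm ^ 2)
    (hbern : qp ^ 2 / 2 + cp2 / (γ - 1) = qm ^ 2 / 2 + cm2 / (γ - 1))
    (hsup : 1 < M2m) (hsub : M2p < 1)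
    -- the constants κ, κ₁, κ₂
    (κ κ1 κ2 : ℝ)
    (hκ : κ = ((γ - 1) / (γ * pp) + 1 / (ρp * qp ^ 2)) * (pp - pm))
    (hκ1 : κ1 = -(1 / (ρm * qm ^ 2)) * (κ + (pp - pm) / (ρp * qp ^ 2))
        - (γ - 1) / (γ * pp) * (1 - ρp / ρm))
    (hκ2 : κ2 = 1 / (γ * cv) * (κ + (cm2 - cp2) / cp2)) :
    ∃ e1 e2 e3 : ℝ, ∀ dp dq ds dpm dqm dsm g1 g2 g3 : ℝ,
      -- (E1)
      (1 / (ρp ^ 2 * qp * cp2) * dp + 1 / (ρp * qp ^ 2) * dq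
          - 1 / (γ * cv * ρp * qp) * ds
        - (1 / (ρm ^ 2 * qm * cm2) * dpm + 1 / (ρm * qm ^ 2) * dqm
          - 1 / (γ * cv * ρm * qm) * dsm) = g1) →
      -- (E2)
      (1 / (ρp * qp) * dp + dq
          - pp * (1 / (ρp ^ 2 * qp * cp2) * dp + 1 / (ρp * qp ^ 2) * dq
              - 1 / (γ * cv * ρp * qp) * ds)
        - (1 / (ρm * qm) * dpm + dqm
          - pm * (1 / (ρm ^ 2 * qm * cm2) * dpm + 1 / (ρm * qm ^ 2) * dqm
              - 1 / (γ * cv * ρm * qm) * dsm)) = g2) →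
      -- (E3)
      (1 / ρp * dp + qp * dq + pp / ((γ - 1) * cv * ρp) * ds
        - (1 / ρm * dpm + qm * dqm + pm / ((γ - 1) * cv * ρm) * dsm) = g3) →
      (M2p - 1) / (ρp * qp ^ 2) * dp
        = (M2m - 1) / (ρm * qm ^ 2) * (1 - κ) * dpm
          + κ1 * (dpm + ρm * qm * dqm) + κ2 * dsm
          + e1 * g1 + e2 * g2 + e3 * g3 := by
  have hg : γ - 1 ≠ 0 := by linarith
  have hg0 : γ ≠ 0 := by linarith
  have hq : qm = ρp * qp / ρm := by field_simp; linarith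
  have h1 : κ1 = (1 - κ) / (ρm * qm ^ 2) - 1 / (ρp * qp ^ 2)
      - (γ - 1) / (γ * pp) * (1 - ρp / ρm) := by
    have h : pp - pm = ρm * qm ^ 2 - ρp * qp ^ 2 := by linarith
    have h2 : (pp - pm) / (ρp * qp ^ 2) = ρm * qm ^ 2 / (ρp * qp ^ 2) - 1 := by
      rw [h]; field_simp
    rw [hκ1, h2]
    field_simp
    ring
  clear hκ1 hmom hbern hsup hsub hmass
  refine ⟨ρp * qp - (1 / qp + (γ - 1) * ρp * qp / (γ * pp)) * pp,
    -(1 / qp + (γ - 1) * ρp * qp / (γ * pp)), (γ - 1) * ρp / (γ * pp), ?_⟩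
  intro dp dq ds dpm dqm dsm g1 g2 g3 e1 e2 e3
  rw [← e1, ← e2, ← e3]
  subst hM2m hM2p
  rw [h1, hκ2, hκ, hcm2, hcp2]
  clear e1 e2 e3 h1 hκ2 hκ hcm2 hcp2
  subst hq
  field_simp
  ring
end
end

section
/- Let lambda > 0, a2max >= 0 and theta1 < theta2 be real numbers. Set H = 1 + 4 a2max/lambda, G = exp(-H theta2 - 1), F(t) = 1 - G e^{H t}, and beta0 = G H e^{H theta1 - 1}. Then: (1) for every t in [theta1, theta2], 1 - e^{-1} <= F(t) < 1, F'(t) < 0 and F''(t) < 0; (2) for every beta in (0, min(1, beta0)], every t in [theta1, theta2], and all reals a1 >= 0, a2 with |a2| <= a2max, and a3 >= lambda, one has a1 * beta * (beta - 1) * F(t) + 2 a2 (beta - 1) F'(t) + a3 (F''(t) + beta F(t)) <= -2 a2max * G H e^{H t} + lambda (beta - G H e^{H t}) < 0. -/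
noncomputable section

open Real Set

/-- the key barrier (comparison function) inequality for the angular part
`F(t) = 1 - G e^{H t}` of the barrier `‖f_s‖ r^β F(t) + σ` used near the corner points
where the shock front meets the nozzle walls. -/
theorem barrier_angular_inequality
    (lam a2max θ1 θ2 : ℝ) (hlam : 0 < lam) (ha2 : 0 ≤ a2max) (hθ : θ1 < θ2) :
    ∀ H G : ℝ, H = 1 + 4 * a2max / lam → G = Real.exp (-H * θ2 - 1) →
    ∀ F : ℝ → ℝ, F = (fun t => 1 - G * Real.exp (H * t)) →
    ∀ β0 : ℝ, β0 = G * H * Real.exp (H * θ1 - 1) →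
    -- (1)
    (∀ t ∈ Set.Icc θ1 θ2,
      1 - Real.exp (-1) ≤ F t ∧ F t < 1 ∧ deriv F t < 0 ∧ deriv (deriv F) t < 0) ∧
    -- (2)
    (∀ β ∈ Set.Ioc (0:ℝ) (min 1 β0), ∀ t ∈ Set.Icc θ1 θ2,
      ∀ a1 a2 a3 : ℝ, 0 ≤ a1 → |a2| ≤ a2max → lam ≤ a3 →
        a1 * β * (β - 1) * F t + 2 * a2 * (β - 1) * deriv F t
            + a3 * (deriv (deriv F) t + β * F t)
          ≤ -(2 * a2max * G * H * Real.exp (H * t))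
              + lam * (β - G * H * Real.exp (H * t)) ∧
        -(2 * a2max * G * H * Real.exp (H * t))
            + lam * (β - G * H * Real.exp (H * t)) < 0) := by
  intro H G hH hG F hF β0 hβ0
  have hq : 0 ≤ 4 * a2max / lam := by positivity
  have hH1 : 1 ≤ H := by rw [hH]; linarith
  have hlH : lam * H = lam + 4 * a2max := by rw [hH]; field_simp
  have hGpos : 0 < G := by rw [hG]; exact Real.exp_pos _
  have hexp : ∀ t : ℝ, HasDerivAt (fun t : ℝ => Real.exp (H * t)) (Real.exp (H * t) * H) t := by
    intro t
    have h := ((hasDerivAt_id t).const_mul H).exp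
    simpa using h
  have hd1 : deriv F = fun t => -(H * (G * Real.exp (H * t))) := by
    funext t
    have h := ((hexp t).const_mul G).const_sub 1
    rw [hF, h.deriv]
    ring
  have hd2 : ∀ t, deriv (deriv F) t = -(H * (H * (G * Real.exp (H * t)))) := by
    intro t
    have h := (((hexp t).const_mul G).const_mul H).neg
    rw [hd1]
    refine (HasDerivAt.deriv (f := fun t => -(H * (G * Real.exp (H * t)))) h).trans ?_
    ring
  have hE1 : ∀ t ∈ Set.Icc θ1 θ2, G * Real.exp (H * t) ≤ Real.exp (-1) := by
    intro t ht
    rw [hG, ← Real.exp_add]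
    apply Real.exp_le_exp.mpr
    nlinarith [ht.2]
  have he1 : Real.exp (-1) < 1 := by
    rw [Real.exp_lt_one_iff]; norm_num
  refine ⟨?_, ?_⟩
  · intro t ht
    have hE := hE1 t ht
    have hEp : 0 < G * Real.exp (H * t) := by positivity
    have hFt : F t = 1 - G * Real.exp (H * t) := by rw [hF]
    have h1 : 0 < H * (G * Real.exp (H * t)) := by positivity
    have h2 : 0 < H * (H * (G * Real.exp (H * t))) := by positivity
    have hd1t : deriv F t = -(H * (G * Real.exp (H * t))) := by rw [hd1]
    rw [hd2, hd1t, hFt]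
    refine ⟨by linarith, by linarith, by linarith, by linarith⟩
  · intro β hβ t ht a1 a2 a3 ha1 ha2' ha3
    have hE := hE1 t ht
    have hEp : 0 < G * Real.exp (H * t) := by positivity
    have hFt : F t = 1 - G * Real.exp (H * t) := by rw [hF]
    have hd1t : deriv F t = -(H * (G * Real.exp (H * t))) := by rw [hd1]
    have hβpos := hβ.1
    have hβ1 : β ≤ 1 := hβ.2.trans (min_le_left _ _)
    have hββ0 : β ≤ β0 := hβ.2.trans (min_le_right _ _)
    have hlt : Real.exp (H * θ1 - 1) < Real.exp (H * t) := by
      apply Real.exp_lt_exp.mpr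
      nlinarith [ht.1]
    have hGH : 0 < G * H := by positivity
    have hβlt : β < H * (G * Real.exp (H * t)) := by
      have := mul_lt_mul_of_pos_left hlt hGH
      rw [hβ0] at hββ0
      linarith
    rw [hd2, hd1t, hFt]
    have e1 : 2 * a2max * G * H * Real.exp (H * t) = 2 * a2max * (H * (G * Real.exp (H * t))) := by
      ring
    have e2 : G * H * Real.exp (H * t) = H * (G * Real.exp (H * t)) := by ring
    rw [e1, e2]
    generalize G * Real.exp (H * t) = E at *
    have hHE : 0 < H * E := by positivity
    refine ⟨?_, ?_⟩
    · have t1 : 0 ≤ a1 * β * (1 - β) * (1 - E) :=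
        mul_nonneg (mul_nonneg (mul_nonneg ha1 hβpos.le) (by linarith)) (by linarith)
      have t2 : a2 * (1 - β) ≤ a2max := by
        have h := (abs_le.mp ha2').2
        have h' : a2 * (1 - β) ≤ a2max * (1 - β) :=
          mul_le_mul_of_nonneg_right h (by linarith)
        nlinarith
      have t2' := mul_le_mul_of_nonneg_right t2 hHE.le
      have hHH : H * E ≤ H * (H * E) := by nlinarith
      have hβE : 0 < β * E := by positivity
      have t3 : (a3 - lam) * (H * (H * E) - β + β * E) ≥ 0 :=
        mul_nonneg (by linarith) (by linarith)
      have t4 : lam * (H * (H * E)) = lam * (H * E) + 4 * a2max * (H * E) := by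
        rw [← mul_assoc, hlH]; ring
      have t5 : 0 ≤ lam * (β * E) := by positivity
      nlinarith
    · have h1 : 0 ≤ a2max * (H * E) := by positivity
      have h2 : 0 < lam * (H * E - β) := mul_pos hlam (by linarith)
      linarith
end
end
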